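/- For every real number q with 0 < q < 1, the function q ↦ −(1 + k(q)^2)/k(q) is differentiable at q with derivative equal to E(q^2)^3 E(q^5)^8 / (q^2 · E(q^{10})^7). -/

import Mathlib

open Real

/-- Euler's product `E(q) = ∏_{j=1}^∞ (1 - q^j)`. -/
noncomputable def eulerE (q : ℝ) : ℝ := ∏' j : ℕ, (1 - q ^ (j + 1))

/-- Ramanujan's level-10 function `k(q)`. -/
noncomputable def ramK (q : ℝ) : ℝ :=
  q * ∏' j : ℕ,
    ((1 - q ^ (10 * j + 1)) * (1 - q ^ (10 * j + 2)) * (1 - q ^ (10 * j + 8)) *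
        (1 - q ^ (10 * j + 9))) /
      ((1 - q ^ (10 * j + 3)) * (1 - q ^ (10 * j + 4)) * (1 - q ^ (10 * j + 6)) *
        (1 - q ^ (10 * j + 7)))

/-!
With `θ(x) = (x; q)_∞ (q/x; q)_∞`, the Jacobi triple product turns a product `θ(xy) θ(x/y)` into a
double series, and splitting that series by parity gives the Weierstrass addition formula. It is
used twice.

* In the nome `q^10`, at powers of `q`, it evaluates `1/k - k` as the Euler quotient
  `E(q^2) E(q^5)^5 / (q E(q) E(q^10)^5)`.
* In the nome `q`, its infinitesimal form says that `θ(xy) θ(x/y)` is, up to elementary factors, the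
  difference of the values at `y` and `x` of the Weierstrass function `∑_{n ∈ ℤ} κ(x q^n)`, where
  `κ(t) = t / (1 - t)^2`. At a primitive tenth root of unity `x = ζ` and `y = ζ^3` this difference
  is a multiple of the Lambert series which is the logarithmic derivative `q k'/k`, while the theta
  side is an Euler quotient, so `q k'/k = E(q) E(q^2)^2 E(q^5)^3 / E(q^10)^2`.

The derivative of `-(1/k + k)` is `(1/k - k) k'/k`, the product of the two evaluations over `q`.
-/

open Filter Topology Finset

/-! ### q-shifted factorials -/

section FiniteProducts

variable {R : Type*} [CommRing R]

/-- The finite q-shifted factorial `(x; q)_n`. -/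
def qPoch (q x : R) (n : ℕ) : R := ∏ j ∈ range n, (1 - x * q ^ j)

lemma qPoch_zero (q x : R) : qPoch q x 0 = 1 := prod_range_zero _

lemma qPoch_succ (q x : R) (n : ℕ) : qPoch q x (n + 1) = qPoch q x n * (1 - x * q ^ n) :=
  prod_range_succ _ _

lemma qPoch_add (q x : R) (m n : ℕ) :
    qPoch q x (m + n) = qPoch q x m * qPoch q (x * q ^ m) n := by
  simp only [qPoch, prod_range_add, pow_add, mul_assoc]

lemma qPoch_succ' (q x : R) (n : ℕ) : qPoch q x (n + 1) = (1 - x) * qPoch q (x * q) n := by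
  rw [add_comm, qPoch_add, qPoch_succ, qPoch_zero, pow_zero, pow_one, mul_one, one_mul]

lemma qPoch_mul (q x : R) (n N : ℕ) :
    qPoch q x (n * N) = ∏ r ∈ range n, qPoch (q ^ n) (x * q ^ r) N := by
  induction N with
  | zero => simp [qPoch_zero]
  | succ N ih =>
    simp only [mul_add_one, qPoch_add, ih, qPoch_succ, prod_mul_distrib]
    congr 1
    exact prod_congr rfl fun r _ => by ring

/-- The Gaussian binomial coefficients, defined by the q-Pascal rule so that they vanish above the
diagonal. -/
def qChoose (q : R) : ℕ → ℕ → R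
  | _, 0 => 1
  | 0, _ + 1 => 0
  | n + 1, k + 1 => qChoose q n (k + 1) + q ^ (n - k) * qChoose q n k

lemma qChoose_zero_right (q : R) (n : ℕ) : qChoose q n 0 = 1 := by cases n <;> rfl

lemma qChoose_succ_succ (q : R) (n k : ℕ) :
    qChoose q (n + 1) (k + 1) = qChoose q n (k + 1) + q ^ (n - k) * qChoose q n k := rfl

lemma qChoose_eq_zero_of_lt (q : R) {n k : ℕ} (h : n < k) : qChoose q n k = 0 := by
  induction n generalizing k with
  | zero => obtain ⟨k, rfl⟩ := Nat.exists_eq_succ_of_ne_zero h.ne'; rfl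
  | succ n ih =>
    obtain ⟨k, rfl⟩ := Nat.exists_eq_succ_of_ne_zero (Nat.ne_zero_of_lt h)
    rw [qChoose_succ_succ, ih (by omega), ih (by omega), mul_zero, add_zero]

lemma qChoose_mul_qPoch_mul_qPoch (q : R) (k d : ℕ) :
    qChoose q (k + d) k * qPoch q q k * qPoch q q d = qPoch q q (k + d) := by
  induction hn : k + d generalizing k d with
  | zero => obtain ⟨rfl, rfl⟩ : k = 0 ∧ d = 0 := by omega
            simp [qChoose_zero_right, qPoch_zero]
  | succ n ih =>
    rcases k with _ | k
    · simp [qChoose_zero_right, qPoch_zero, ← hn]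
    have hkd : n = k + d := by omega
    have below := ih k d hkd.symm
    rw [qChoose_succ_succ, qPoch_succ q q k, qPoch_succ q q n, show n - k = d by omega]
    rcases d with _ | d
    · obtain rfl : n = k := hkd
      rw [qChoose_eq_zero_of_lt q (Nat.lt_succ_self n), pow_zero]
      linear_combination (1 - q * q ^ n) * below
    · have left := ih (k + 1) d (by omega)
      rw [qPoch_succ q q k] at left
      rw [qPoch_succ q q d] at below ⊢
      have hpow : q ^ n = q ^ k * q ^ (d + 1) := by rw [hkd, pow_add]
      linear_combination (1 - q * q ^ d) * left + q ^ (d + 1) * (1 - q * q ^ k) * below +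
        q * qPoch q q n * hpow

theorem qPoch_eq_sum_qChoose (q x : R) (n : ℕ) :
    qPoch q x n = ∑ k ∈ range (n + 1), qChoose q n k * ((-x) ^ k * q ^ k.choose 2) := by
  induction n with
  | zero => simp [qPoch_zero, qChoose_zero_right]
  | succ n ih =>
    set t : ℕ → R := fun k => (-x) ^ k * q ^ k.choose 2
    have pascal : ∀ k ∈ range (n + 1), qChoose q (n + 1) (k + 1) * t (k + 1) =
        qChoose q n (k + 1) * t (k + 1) - qChoose q n k * t k * (x * q ^ n) := by
      intro k hk
      have hpow : q ^ n = q ^ k * q ^ (n - k) := by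
        rw [← pow_add, Nat.add_sub_cancel' (mem_range_succ_iff.1 hk)]
      simp only [t, qChoose_succ_succ, hpow, Nat.choose_succ_succ' k 1, Nat.choose_one_right,
        pow_add]
      ring
    have shift : ∑ k ∈ range (n + 1), qChoose q n (k + 1) * t (k + 1) + qChoose q n 0 * t 0 =
        qPoch q x n := by
      rw [ih, ← sum_range_succ' (fun k => qChoose q n k * t k) (n + 1), sum_range_succ,
        qChoose_eq_zero_of_lt q (Nat.lt_succ_self n), zero_mul, add_zero]
    rw [sum_range_succ', sum_congr rfl pascal, sum_sub_distrib, ← sum_mul, ← ih,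
      qChoose_zero_right, qPoch_succ]
    rw [qChoose_zero_right] at shift
    linear_combination -shift

lemma prod_one_sub_mul_pow [IsDomain R] {ζ : R} {n : ℕ} (hζ : IsPrimitiveRoot ζ n) (hn : n ≠ 0)
    (t : R) : ∏ r ∈ range n, (1 - t * ζ ^ r) = 1 - t ^ n := by
  simpa [Polynomial.eval_prod, mul_comm] using
    (congrArg (Polynomial.eval 1)
      (X_pow_sub_C_eq_prod hζ (Nat.pos_of_ne_zero hn) (rfl : t ^ n = t ^ n))).symm

end FiniteProducts

section InfiniteProducts

variable {𝕜 : Type*} [NormedField 𝕜]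

/-- The infinite q-shifted factorial `(x; q)_∞`, meaningful for `‖q‖ < 1`. -/
noncomputable def qPochInf (q x : 𝕜) : 𝕜 := ∏' j : ℕ, (1 - x * q ^ j)

/-- Euler's product `(q; q)_∞` over a normed field; over `ℝ` it is `eulerE`. -/
noncomputable def eulerFn (q : 𝕜) : 𝕜 := qPochInf q q

variable {q x : 𝕜}

lemma norm_pow_lt_one (hq : ‖q‖ < 1) {n : ℕ} (hn : n ≠ 0) : ‖q ^ n‖ < 1 := by
  rw [norm_pow]; exact pow_lt_one₀ (norm_nonneg _) hq hn

lemma norm_eq_one_of_pow_eq_one {n : ℕ} (hn : n ≠ 0) (hx : x ^ n = 1) : ‖x‖ = 1 :=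
  (pow_eq_one_iff_of_nonneg (norm_nonneg x) hn).1 (by rw [← norm_pow, hx, norm_one])

lemma mul_pow_ne_one (hq : ‖q‖ < 1) (hx : ‖x‖ < 1) (j : ℕ) : x * q ^ j ≠ 1 := by
  intro h
  have : ‖x * q ^ j‖ ≤ ‖x‖ := by
    rw [norm_mul, norm_pow]
    exact mul_le_of_le_one_right (norm_nonneg _) (pow_le_one₀ (norm_nonneg _) hq.le)
  rw [h, norm_one] at this
  exact this.not_gt hx

lemma one_sub_ne_zero_of_norm_lt_one (hx : ‖x‖ < 1) : 1 - x ≠ 0 :=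
  sub_ne_zero.2 fun h => by simp [← h] at hx

lemma summable_norm_mul_pow (hq : ‖q‖ < 1) (x : 𝕜) : Summable fun j : ℕ => ‖x * q ^ j‖ := by
  simp only [norm_mul, norm_pow]
  exact (summable_geometric_of_lt_one (norm_nonneg _) hq).mul_left _

lemma qPoch_self_ne_zero (hq : ‖q‖ < 1) (n : ℕ) : qPoch q q n ≠ 0 :=
  prod_ne_zero_iff.2 fun j _ => sub_ne_zero.2 (mul_pow_ne_one hq hq j).symm

variable [CompleteSpace 𝕜]

lemma hasProd_one_sub_mul_pow (hq : ‖q‖ < 1) (x : 𝕜) :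
    HasProd (fun j : ℕ => 1 - x * q ^ j) (qPochInf q x) := by
  have hm : Multipliable fun j : ℕ => 1 - x * q ^ j := by
    simpa only [sub_eq_add_neg] using
      multipliable_one_add_of_summable (f := fun j : ℕ => -(x * q ^ j))
        (by simpa only [norm_neg] using summable_norm_mul_pow hq x)
  exact hm.hasProd

lemma hasProd_one_sub_pow (hq : ‖q‖ < 1) {N : ℕ} (hN : N ≠ 0) (a : ℕ) :
    HasProd (fun j : ℕ => 1 - q ^ (N * j + a)) (qPochInf (q ^ N) (q ^ a)) := by
  simpa only [add_comm (N * _), pow_add, pow_mul] using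
    hasProd_one_sub_mul_pow (norm_pow_lt_one hq hN) (q ^ a)

lemma tendsto_qPoch (hq : ‖q‖ < 1) (x : 𝕜) :
    Tendsto (qPoch q x) atTop (𝓝 (qPochInf q x)) :=
  (hasProd_one_sub_mul_pow hq x).tendsto_prod_nat

lemma qPochInf_ne_zero (hq : ‖q‖ < 1) (hx : ∀ j : ℕ, x * q ^ j ≠ 1) : qPochInf q x ≠ 0 := by
  simp only [qPochInf, sub_eq_add_neg]
  refine tprod_one_add_ne_zero_of_summable (fun j => ?_)
    (by simpa only [norm_neg] using summable_norm_mul_pow hq x)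
  rw [← sub_eq_add_neg]
  exact sub_ne_zero.2 (hx j).symm

lemma qPochInf_ne_zero_of_norm_lt_one (hq : ‖q‖ < 1) (hx : ‖x‖ < 1) : qPochInf q x ≠ 0 :=
  qPochInf_ne_zero hq (mul_pow_ne_one hq hx)

lemma eulerFn_ne_zero (hq : ‖q‖ < 1) : eulerFn q ≠ 0 := qPochInf_ne_zero_of_norm_lt_one hq hq

lemma qPochInf_eq_one_sub_mul (hq : ‖q‖ < 1) (x : 𝕜) :
    qPochInf q x = (1 - x) * qPochInf q (x * q) :=
  tendsto_nhds_unique ((tendsto_qPoch hq x).comp (tendsto_add_atTop_nat 1))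
    (((tendsto_qPoch hq (x * q)).const_mul (1 - x)).congr fun n => (qPoch_succ' q x n).symm)

lemma qPochInf_dissection (hq : ‖q‖ < 1) (x : 𝕜) {n : ℕ} (hn : n ≠ 0) :
    qPochInf q x = ∏ r ∈ range n, qPochInf (q ^ n) (x * q ^ r) :=
  tendsto_nhds_unique
    ((tendsto_qPoch hq x).comp (tendsto_id.const_mul_atTop' (Nat.pos_of_ne_zero hn)))
    ((tendsto_finsetProd _ fun r _ => tendsto_qPoch (norm_pow_lt_one hq hn) (x * q ^ r)).congr
      fun N => (qPoch_mul q x n N).symm)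

lemma prod_qPochInf_mul_pow (hq : ‖q‖ < 1) (x : 𝕜) {ζ : 𝕜} {n : ℕ} (hζ : IsPrimitiveRoot ζ n)
    (hn : n ≠ 0) : ∏ r ∈ range n, qPochInf q (x * ζ ^ r) = qPochInf (q ^ n) (x ^ n) := by
  refine tendsto_nhds_unique (tendsto_finsetProd _ fun r _ => tendsto_qPoch hq (x * ζ ^ r))
    ((tendsto_qPoch (norm_pow_lt_one hq hn) (x ^ n)).congr fun N => ?_)
  simp only [qPoch]
  rw [Finset.prod_comm]
  refine prod_congr rfl fun j _ => ?_
  rw [← pow_mul, mul_comm n j, pow_mul, ← mul_pow, ← prod_one_sub_mul_pow hζ hn]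
  exact prod_congr rfl fun r _ => by ring

lemma continuous_qPochInf (hq : ‖q‖ < 1) : Continuous (qPochInf q) := by
  have heq : qPochInf q = fun y => ∏' j : ℕ, (1 + -(y * q ^ j)) := by
    funext y; simp only [qPochInf, sub_eq_add_neg]
  refine continuous_iff_continuousAt.2 fun x => ?_
  rw [heq]
  refine tendsto_tprod_one_add_of_dominated_convergence (f := fun y j => -(y * q ^ j))
    (bound := fun j => (‖x‖ + 1) * ‖q‖ ^ j)
    ((summable_geometric_of_lt_one (norm_nonneg _) hq).mul_left _)
    (fun j => Continuous.tendsto (by fun_prop) x) ?_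
  filter_upwards [(continuous_norm.tendsto x).eventually_lt_const (lt_add_one ‖x‖)] with y hy j
  rw [norm_neg, norm_mul, norm_pow]
  gcongr

end InfiniteProducts

/-! ### The Jacobi triple product -/

lemma two_mul_mul_pred_ediv_two (n : ℤ) : 2 * (n * (n - 1) / 2) = n * (n - 1) :=
  Int.mul_ediv_cancel' (Int.even_mul_pred_self n).two_dvd

section ThetaTerm

variable {F : Type*} [Field F] {q x : F}

/-- The general term `(-x)^n q^{n(n-1)/2}` of the bilateral theta series. -/
def thetaTerm (q x : F) (n : ℤ) : F := (-x) ^ n * q ^ (n * (n - 1) / 2)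

lemma thetaTerm_natCast (q x : F) (k : ℕ) : thetaTerm q x k = (-x) ^ k * q ^ k.choose 2 := by
  have triangular : (k : ℤ) * (k - 1) / 2 = (k.choose 2 : ℕ) := by
    induction k with
    | zero => simp
    | succ k ih =>
      have := two_mul_mul_pred_ediv_two k
      have := two_mul_mul_pred_ediv_two ((k + 1 : ℕ) : ℤ)
      rw [Nat.choose_succ_succ' k 1, Nat.choose_one_right]
      push_cast at *
      linarith
  rw [thetaTerm, triangular, zpow_natCast, zpow_natCast]

lemma thetaTerm_one (q x : F) : thetaTerm q x 1 = -x := by simp [thetaTerm]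

lemma thetaTerm_add (hq : q ≠ 0) (hx : x ≠ 0) (m n : ℤ) :
    thetaTerm q x (m + n) = thetaTerm q x m * thetaTerm q (x * q ^ m) n := by
  have exponent : (m + n) * (m + n - 1) / 2 = m * (m - 1) / 2 + n * (n - 1) / 2 + m * n := by
    linarith [two_mul_mul_pred_ediv_two (m + n), two_mul_mul_pred_ediv_two m,
      two_mul_mul_pred_ediv_two n]
  simp only [thetaTerm]
  rw [exponent, ← neg_mul, mul_zpow, ← zpow_mul, zpow_add₀ (neg_ne_zero.2 hx), zpow_add₀ hq,
    zpow_add₀ hq]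
  ring

lemma thetaTerm_neg (hq : q ≠ 0) (x : F) (n : ℤ) : thetaTerm q x (-n) = thetaTerm q (q / x) n := by
  have exponent : -n * (-n - 1) / 2 = n + n * (n - 1) / 2 := by
    linarith [two_mul_mul_pred_ediv_two (-n), two_mul_mul_pred_ediv_two n]
  simp only [thetaTerm]
  rw [exponent, zpow_add₀ hq, ← mul_assoc, zpow_neg, ← inv_zpow, ← mul_zpow]
  congr 2
  rw [inv_neg, neg_mul, div_eq_mul_inv, mul_comm]

lemma qPoch_mul_thetaTerm_neg (hq : q ≠ 0) (hx : x ≠ 0) (N : ℕ) :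
    qPoch q (x * q ^ (-N : ℤ)) N * thetaTerm q x (-N) = qPoch q (q / x) N := by
  induction N with
  | zero => simp [qPoch_zero, thetaTerm]
  | succ N ih =>
    have shift : x * q ^ (-(N + 1 : ℕ) : ℤ) * q = x * q ^ (-N : ℤ) := by
      rw [mul_assoc, ← zpow_add_one₀ hq]; push_cast; ring_nf
    have term : thetaTerm q x (-(N + 1 : ℕ)) = thetaTerm q x (-N) * -(q / x * q ^ N) := by
      rw [thetaTerm_neg hq, thetaTerm_neg hq, Nat.cast_succ,
        thetaTerm_add hq (div_ne_zero hq hx), thetaTerm_one, zpow_natCast]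
    rw [qPoch_succ', shift, term, qPoch_succ, ← ih, zpow_neg, zpow_natCast]
    field_simp
    ring

lemma qPoch_mul_qPoch_div (hq : q ≠ 0) (hx : x ≠ 0) (N : ℕ) :
    qPoch q x N * qPoch q (q / x) N =
      ∑ k ∈ range (2 * N + 1), qChoose q (2 * N) k * thetaTerm q x (k - N) := by
  have split : qPoch q (x * q ^ (-N : ℤ)) (2 * N) = qPoch q (x * q ^ (-N : ℤ)) N * qPoch q x N := by
    rw [two_mul, qPoch_add, mul_assoc, ← zpow_natCast, ← zpow_add₀ hq, neg_add_cancel, zpow_zero,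
      mul_one]
  calc qPoch q x N * qPoch q (q / x) N
      = thetaTerm q x (-N) * qPoch q (x * q ^ (-N : ℤ)) (2 * N) := by
        rw [← qPoch_mul_thetaTerm_neg hq hx, split]; ring
    _ = _ := by
        rw [qPoch_eq_sum_qChoose, mul_sum]
        refine sum_congr rfl fun k _ => ?_
        rw [← thetaTerm_natCast, sub_eq_neg_add, thetaTerm_add hq hx]
        ring

end ThetaTerm

section JacobiTripleProduct

variable {𝕜 : Type*} [NormedField 𝕜] {q x : 𝕜}

/-- The multiplicative theta function `(x; q)_∞ (q/x; q)_∞`. -/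
noncomputable def qTheta (q x : 𝕜) : 𝕜 := qPochInf q x * qPochInf q (q / x)

lemma qTheta_div (hq : q ≠ 0) (x : 𝕜) : qTheta q (q / x) = qTheta q x := by
  rw [qTheta, qTheta, div_div_cancel₀ hq, mul_comm]

lemma qTheta_pow_eq_mul (hq0 : q ≠ 0) {N a : ℕ} (haN : a ≤ N) :
    qTheta (q ^ N) (q ^ a) = qPochInf (q ^ N) (q ^ a) * qPochInf (q ^ N) (q ^ (N - a)) := by
  rw [qTheta, pow_sub₀ q hq0 haN, div_eq_mul_inv]

lemma summable_norm_thetaTerm_natCast (hq0 : q ≠ 0) (hq : ‖q‖ < 1) (hx : x ≠ 0) :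
    Summable fun k : ℕ => ‖thetaTerm q x k‖ := by
  have hne (k : ℕ) : thetaTerm q x k ≠ 0 := by simp [thetaTerm_natCast, hq0, hx]
  refine summable_of_ratio_test_tendsto_lt_one zero_lt_one
    (.of_forall fun k => norm_ne_zero_iff.2 (hne k)) ?_
  have ratio (k : ℕ) : ‖‖thetaTerm q x (k + 1 : ℕ)‖‖ / ‖‖thetaTerm q x k‖‖ = ‖x‖ * ‖q‖ ^ k := by
    rw [norm_norm, norm_norm, Nat.cast_succ, thetaTerm_add hq0 hx, thetaTerm_one, norm_mul,
      mul_div_cancel_left₀ _ (norm_ne_zero_iff.2 (hne k)), norm_neg, norm_mul, zpow_natCast,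
      norm_pow]
  simpa only [ratio, mul_zero] using
    (tendsto_pow_atTop_nhds_zero_of_lt_one (norm_nonneg q) hq).const_mul ‖x‖

lemma summable_norm_thetaTerm (hq0 : q ≠ 0) (hq : ‖q‖ < 1) (hx : x ≠ 0) :
    Summable fun n : ℤ => ‖thetaTerm q x n‖ := by
  refine .of_nat_of_neg (summable_norm_thetaTerm_natCast hq0 hq hx) ?_
  simpa only [thetaTerm_neg hq0] using
    summable_norm_thetaTerm_natCast hq0 hq (div_ne_zero hq0 hx)

lemma qChoose_eq_div (hq : ‖q‖ < 1) (k d : ℕ) :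
    qChoose q (k + d) k = qPoch q q (k + d) / (qPoch q q k * qPoch q q d) := by
  rw [eq_div_iff (mul_ne_zero (qPoch_self_ne_zero hq k) (qPoch_self_ne_zero hq d)), ← mul_assoc,
    qChoose_mul_qPoch_mul_qPoch]

lemma tsum_indicator_qChoose_mul_thetaTerm (hq0 : q ≠ 0) (hx : x ≠ 0) (N : ℕ) :
    ∑' n : ℤ, (Set.Ici (-N : ℤ)).indicator
      (fun n => qChoose q (2 * N) (n + N).toNat * thetaTerm q x n) n =
      qPoch q x N * qPoch q (q / x) N := by
  have inj : Function.Injective fun k : ℕ => (k : ℤ) - N := fun a b h => by simpa using h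
  rw [qPoch_mul_qPoch_div hq0 hx, ← inj.tsum_eq]
  · rw [tsum_eq_sum (s := range (2 * N + 1))]
    · exact sum_congr rfl fun k _ => by simp [Set.indicator]
    · intro k hk
      rw [mem_range, not_lt] at hk
      simp [Set.indicator, qChoose_eq_zero_of_lt q hk]
  · intro n hn
    have hmem : n ∈ Set.Ici (-N : ℤ) := Set.mem_of_indicator_ne_zero hn
    rw [Set.mem_Ici] at hmem
    exact ⟨(n + N).toNat, by simp only; omega⟩

variable [CompleteSpace 𝕜]

lemma qTheta_pow_ne_zero (hq0 : q ≠ 0) (hq : ‖q‖ < 1) {N a : ℕ} (ha : a ≠ 0) (haN : a < N) :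
    qTheta (q ^ N) (q ^ a) ≠ 0 := by
  have hqN := norm_pow_lt_one hq (by omega : N ≠ 0)
  rw [qTheta_pow_eq_mul hq0 haN.le]
  exact mul_ne_zero (qPochInf_ne_zero_of_norm_lt_one hqN (norm_pow_lt_one hq ha))
    (qPochInf_ne_zero_of_norm_lt_one hqN (norm_pow_lt_one hq (by omega)))

lemma exists_norm_qChoose_le (hq : ‖q‖ < 1) : ∃ C, ∀ n k, ‖qChoose q n k‖ ≤ C := by
  have lim := tendsto_qPoch hq q
  obtain ⟨A, -, hA⟩ := (Metric.isBounded_range_of_tendsto _ lim).exists_pos_norm_le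
  obtain ⟨B, hB0, hB⟩ :=
    (Metric.isBounded_range_of_tendsto _ (lim.inv₀ (eulerFn_ne_zero hq))).exists_pos_norm_le
  simp only [Set.forall_mem_range] at hA hB
  have hA0 : 0 ≤ A := (norm_nonneg _).trans (hA 0)
  refine ⟨A * (B * B), fun n k => ?_⟩
  rcases le_or_gt k n with hkn | hkn
  · obtain ⟨d, rfl⟩ := Nat.exists_eq_add_of_le hkn
    rw [qChoose_eq_div hq, div_eq_mul_inv, mul_inv, norm_mul, norm_mul]
    gcongr
    exacts [hA _, hB _, hB _]
  · rw [qChoose_eq_zero_of_lt q hkn, norm_zero]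
    positivity

lemma tendsto_qChoose_two_mul (hq : ‖q‖ < 1) (n : ℤ) :
    Tendsto (fun N : ℕ => qChoose q (2 * N) (n + N).toNat) atTop (𝓝 (eulerFn q)⁻¹) := by
  have lim {u : ℕ → ℕ} (hu : Tendsto u atTop atTop) :
      Tendsto (fun N => qPoch q q (u N)) atTop (𝓝 (eulerFn q)) := (tendsto_qPoch hq q).comp hu
  have shift (m : ℤ) : Tendsto (fun N : ℕ => (m + N).toNat) atTop atTop :=
    tendsto_atTop_mono (fun N => (by omega : N - m.natAbs ≤ (m + N).toNat))
      (tendsto_sub_atTop_nat m.natAbs)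
  have hE := eulerFn_ne_zero hq
  have key := (lim (tendsto_id.const_mul_atTop' two_pos)).div
    ((lim (shift n)).mul (lim (shift (-n)))) (mul_ne_zero hE hE)
  rw [div_mul_cancel_left₀ hE] at key
  refine key.congr' ?_
  filter_upwards [eventually_ge_atTop n.natAbs] with N hN
  have hsum : 2 * N = (n + N).toNat + (-n + N).toNat := by omega
  simp only [Pi.div_apply, id_eq, hsum, qChoose_eq_div hq]

theorem tsum_thetaTerm (hq0 : q ≠ 0) (hq : ‖q‖ < 1) (hx : x ≠ 0) :
    ∑' n : ℤ, thetaTerm q x n = eulerFn q * qTheta q x := by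
  obtain ⟨C, hC⟩ := exists_norm_qChoose_le hq
  have lim_sum := tendsto_tsum_of_dominated_convergence
    (f := fun (N : ℕ) (n : ℤ) => (Set.Ici (-N : ℤ)).indicator
      (fun n => qChoose q (2 * N) (n + N).toNat * thetaTerm q x n) n)
    (g := fun n => (eulerFn q)⁻¹ * thetaTerm q x n) (𝓕 := atTop)
    ((summable_norm_thetaTerm hq0 hq hx).mul_left C) (fun n => ?_) (.of_forall fun N n => ?_)
  · simp only [tsum_indicator_qChoose_mul_thetaTerm hq0 hx, tsum_mul_left] at lim_sum
    have key : qTheta q x = (eulerFn q)⁻¹ * ∑' n : ℤ, thetaTerm q x n :=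
      tendsto_nhds_unique ((tendsto_qPoch hq x).mul (tendsto_qPoch hq (q / x))) lim_sum
    rw [key, mul_inv_cancel_left₀ (eulerFn_ne_zero hq)]
  · refine ((tendsto_qChoose_two_mul hq n).mul_const _).congr' ?_
    filter_upwards [eventually_ge_atTop n.natAbs] with N hN
    rw [Set.indicator_of_mem (Set.mem_Ici.2 (by omega))]
  · refine (norm_indicator_le_norm_self _ _).trans ?_
    rw [norm_mul]
    exact mul_le_mul_of_nonneg_right (hC _ _) (norm_nonneg _)

end JacobiTripleProduct

/-! ### The Weierstrass addition formula -/

/-- `ℤ × ℤ` split by the parity of the coordinate sum, each class being parametrized by half the sum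
and half the difference of the coordinates (rounded down). -/
def intProdParityEquiv : (ℤ × ℤ) ⊕ (ℤ × ℤ) ≃ ℤ × ℤ where
  toFun := Sum.elim (fun p => (p.1 + p.2, p.1 - p.2)) (fun p => (p.1 + p.2 + 1, p.1 - p.2))
  invFun p :=
    if (p.1 + p.2) % 2 = 0 then .inl ((p.1 + p.2) / 2, (p.1 - p.2) / 2)
    else .inr ((p.1 + p.2) / 2, (p.1 - p.2) / 2)
  left_inv := by
    rintro (⟨a, b⟩ | ⟨a, b⟩)
    · have even : (a + b + (a - b)) % 2 = 0 := by omega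
      simp only [Sum.elim_inl, even, if_true, Sum.inl.injEq, Prod.mk.injEq]
      omega
    · have odd : ¬ (a + b + 1 + (a - b)) % 2 = 0 := by omega
      simp only [Sum.elim_inr, odd, if_false, Sum.inr.injEq, Prod.mk.injEq]
      omega
  right_inv := by
    rintro ⟨m, n⟩
    by_cases even : (m + n) % 2 = 0
    · simp only [even, if_true, Sum.elim_inl, Prod.mk.injEq]
      omega
    · simp only [even, if_false, Sum.elim_inr, Prod.mk.injEq]
      omega

lemma tsum_int_prod_eq_tsum_add_tsum {E : Type*} [NormedAddCommGroup E] [CompleteSpace E]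
    {f : ℤ × ℤ → E} (hf : Summable f) :
    ∑' p, f p = ∑' p : ℤ × ℤ, f (p.1 + p.2, p.1 - p.2) +
      ∑' p : ℤ × ℤ, f (p.1 + p.2 + 1, p.1 - p.2) := by
  have hs : Summable fun c => f (intProdParityEquiv c) :=
    hf.comp_injective intProdParityEquiv.injective
  rw [← intProdParityEquiv.tsum_eq, Summable.tsum_sum (hs.comp_injective Sum.inl_injective)
    (hs.comp_injective Sum.inr_injective)]
  rfl

section ParityClasses

variable {F : Type*} [Field F] {q x y : F}

lemma thetaTerm_sq_neg_sq (q x : F) (n : ℤ) :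
    thetaTerm (q ^ 2) (-x ^ 2) n = x ^ (2 * n) * q ^ (n * (n - 1)) := by
  rw [thetaTerm, neg_neg, zpow_mul x, ← two_mul_mul_pred_ediv_two n, zpow_mul q,
    Int.mul_ediv_cancel_left _ two_ne_zero]
  norm_cast

lemma thetaTerm_sq_neg_mul_sq (hq : q ≠ 0) (x : F) (n : ℤ) :
    thetaTerm (q ^ 2) (-(q * x ^ 2)) n = x ^ (2 * n) * q ^ (n * n) := by
  have exponent : n * n = n + n * (n - 1) := by ring
  rw [exponent, zpow_add₀ hq, mul_left_comm, ← thetaTerm_sq_neg_sq, thetaTerm, thetaTerm, neg_neg,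
    neg_neg, mul_zpow, mul_assoc]

lemma thetaTerm_mul_thetaTerm_div_of_even (hq : q ≠ 0) (hx : x ≠ 0) (hy : y ≠ 0) (a b : ℤ) :
    thetaTerm q (x * y) (a + b) * thetaTerm q (x / y) (a - b) =
      thetaTerm (q ^ 2) (-x ^ 2) a * thetaTerm (q ^ 2) (-(q * y ^ 2)) b := by
  have exponent : (a + b) * (a + b - 1) / 2 + (a - b) * (a - b - 1) / 2 = a * (a - 1) + b * b := by
    linarith [two_mul_mul_pred_ediv_two (a + b), two_mul_mul_pred_ediv_two (a - b)]
  have pow_q : q ^ ((a + b) * (a + b - 1) / 2) * q ^ ((a - b) * (a - b - 1) / 2) =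
      q ^ (a * (a - 1)) * q ^ (b * b) := by
    rw [← zpow_add₀ hq, ← zpow_add₀ hq, exponent]
  have pow_x : (-x) ^ (a + b) * (-x) ^ (a - b) = x ^ (2 * a) := by
    rw [← zpow_add₀ (neg_ne_zero.2 hx), ← (even_two_mul a).neg_zpow]
    ring_nf
  have pow_y : y ^ (a + b) * y⁻¹ ^ (a - b) = y ^ (2 * b) := by
    rw [inv_zpow', ← zpow_add₀ hy]
    ring_nf
  rw [thetaTerm_sq_neg_sq, thetaTerm_sq_neg_mul_sq hq, ← pow_x, ← pow_y, mul_mul_mul_comm, ← pow_q,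
    thetaTerm, thetaTerm, div_eq_mul_inv, ← neg_mul, ← neg_mul, mul_zpow, mul_zpow]
  ring

lemma thetaTerm_mul_thetaTerm_div_of_odd (hq : q ≠ 0) (hx : x ≠ 0) (hy : y ≠ 0) (a b : ℤ) :
    thetaTerm q (x * y) (a + b + 1) * thetaTerm q (x / y) (a - b) =
      -(x / y) * (thetaTerm (q ^ 2) (-(q * x ^ 2)) a * thetaTerm (q ^ 2) (-y ^ 2) (b + 1)) := by
  rw [thetaTerm_add hq (mul_ne_zero hx hy), thetaTerm_one, mul_right_comm,
    thetaTerm_mul_thetaTerm_div_of_even hq hx hy]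
  simp only [thetaTerm_sq_neg_sq, thetaTerm_sq_neg_mul_sq hq]
  have pow_y : y ^ (2 * (b + 1)) = y ^ (2 * b) * y * y := by
    rw [mul_add_one, zpow_add₀ hy, zpow_ofNat, pow_two, mul_assoc]
  have pow_q : q ^ (a * (a - 1)) * q ^ (b * b) * q ^ (a + b) =
      q ^ (a * a) * q ^ ((b + 1) * (b + 1 - 1)) := by
    simp only [← zpow_add₀ hq]
    ring_nf
  rw [pow_y]
  field_simp
  linear_combination (-1 : F) * pow_q

end ParityClasses

section Weierstrass

variable {𝕜 : Type*} [NormedField 𝕜] [CompleteSpace 𝕜] {q x y u v : 𝕜}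

lemma tsum_thetaTerm_mul_tsum_thetaTerm_div (hq0 : q ≠ 0) (hq : ‖q‖ < 1) (hx : x ≠ 0)
    (hy : y ≠ 0) :
    (∑' n, thetaTerm q (x * y) n) * (∑' n, thetaTerm q (x / y) n) =
      (∑' n, thetaTerm (q ^ 2) (-x ^ 2) n) * (∑' n, thetaTerm (q ^ 2) (-(q * y ^ 2)) n) -
      x / y * ((∑' n, thetaTerm (q ^ 2) (-(q * x ^ 2)) n) *
        ∑' n, thetaTerm (q ^ 2) (-y ^ 2) n) := by
  have sq_ne {t : 𝕜} (ht : t ≠ 0) : -t ^ 2 ≠ 0 := neg_ne_zero.2 (pow_ne_zero 2 ht)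
  have mul_sq_ne {t : 𝕜} (ht : t ≠ 0) : -(q * t ^ 2) ≠ 0 :=
    neg_ne_zero.2 (mul_ne_zero hq0 (pow_ne_zero 2 ht))
  have summable₁ {t : 𝕜} (ht : t ≠ 0) := summable_norm_thetaTerm hq0 hq ht
  have summable₂ {t : 𝕜} (ht : t ≠ 0) :=
    summable_norm_thetaTerm (pow_ne_zero 2 hq0) (norm_pow_lt_one hq two_ne_zero) ht
  have shifted : ∑' n, thetaTerm (q ^ 2) (-y ^ 2) (n + 1) = ∑' n, thetaTerm (q ^ 2) (-y ^ 2) n :=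
    (Equiv.addRight (1 : ℤ)).tsum_eq _
  have hxy := summable₁ (mul_ne_zero hx hy)
  have hxy' := summable₁ (div_ne_zero hx hy)
  have summable_shifted : Summable fun n : ℤ => ‖thetaTerm (q ^ 2) (-y ^ 2) (n + 1)‖ :=
    (summable₂ (sq_ne hy)).comp_injective (add_left_injective 1)
  have summable_pair : Summable fun p : ℤ × ℤ =>
      thetaTerm q (x * y) p.1 * thetaTerm q (x / y) p.2 :=
    summable_mul_of_summable_norm hxy hxy'
  rw [← shifted, tsum_mul_tsum_of_summable_norm hxy hxy',
    tsum_mul_tsum_of_summable_norm (summable₂ (sq_ne hx)) (summable₂ (mul_sq_ne hy)),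
    tsum_mul_tsum_of_summable_norm (summable₂ (mul_sq_ne hx)) summable_shifted,
    tsum_int_prod_eq_tsum_add_tsum summable_pair]
  simp only [thetaTerm_mul_thetaTerm_div_of_even hq0 hx hy,
    thetaTerm_mul_thetaTerm_div_of_odd hq0 hx hy]
  rw [tsum_mul_left, neg_mul, sub_eq_add_neg]

theorem eulerFn_sq_mul_qTheta_mul_qTheta_div (hq0 : q ≠ 0) (hq : ‖q‖ < 1) (hx : x ≠ 0)
    (hy : y ≠ 0) :
    eulerFn q ^ 2 * (qTheta q (x * y) * qTheta q (x / y)) = eulerFn (q ^ 2) ^ 2 *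
      (qTheta (q ^ 2) (-x ^ 2) * qTheta (q ^ 2) (-(q * y ^ 2)) -
        x / y * (qTheta (q ^ 2) (-(q * x ^ 2)) * qTheta (q ^ 2) (-y ^ 2))) := by
  have series₂ {t : 𝕜} (ht : t ≠ 0) :=
    tsum_thetaTerm (pow_ne_zero 2 hq0) (norm_pow_lt_one hq two_ne_zero) ht
  have rank_two := tsum_thetaTerm_mul_tsum_thetaTerm_div hq0 hq hx hy
  rw [tsum_thetaTerm hq0 hq (mul_ne_zero hx hy), tsum_thetaTerm hq0 hq (div_ne_zero hx hy),
    series₂ (by simp [hx]), series₂ (by simp [hy, hq0]), series₂ (by simp [hx, hq0]),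
    series₂ (by simp [hy])] at rank_two
  linear_combination rank_two

/-- Every product `θ(ab) θ(a/b)` is a determinant in two functions of `a` and two of `b`, and the
three such products satisfy the Plücker relation. -/
theorem qTheta_weierstrass (hq0 : q ≠ 0) (hq : ‖q‖ < 1) (hx : x ≠ 0) (hy : y ≠ 0) (hu : u ≠ 0)
    (hv : v ≠ 0) :
    y * (qTheta q (x * y) * qTheta q (x / y)) * (qTheta q (u * v) * qTheta q (u / v)) =
      u * (qTheta q (x * u) * qTheta q (x / u)) * (qTheta q (y * v) * qTheta q (y / v)) -
      u * (qTheta q (x * v) * qTheta q (x / v)) * (qTheta q (y * u) * qTheta q (y / u)) := by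
  have hE : eulerFn q ^ 2 * eulerFn q ^ 2 ≠ 0 := by simp [eulerFn_ne_zero hq]
  have expand {a b : 𝕜} (ha : a ≠ 0) (hb : b ≠ 0) :=
    eulerFn_sq_mul_qTheta_mul_qTheta_div hq0 hq ha hb
  refine mul_left_cancel₀ hE ?_
  have regroup (c s t : 𝕜) : eulerFn q ^ 2 * eulerFn q ^ 2 * (c * s * t) =
    c * (eulerFn q ^ 2 * s) * (eulerFn q ^ 2 * t) := by ring
  rw [mul_sub, regroup, regroup, regroup, expand hx hy, expand hu hv, expand hx hu, expand hy hv,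
    expand hx hv, expand hy hu]
  field_simp
  ring

end Weierstrass

/-! ### The difference formula for the Weierstrass function -/

theorem hasDerivAt_tprod_one_add {ι : Type*} {s : Set ℂ} (hs : IsOpen s) {z : ℂ} (hz : z ∈ s)
    {f : ι → ℂ → ℂ} {f' : ι → ℂ} {u : ι → ℝ} (hu : Summable u)
    (hfu : ∀ i, ∀ w ∈ s, ‖f i w‖ ≤ u i) (hd : ∀ i, DifferentiableOn ℂ (f i) s)
    (hf' : ∀ i, HasDerivAt (f i) (f' i) z) (hne : ∀ i, 1 + f i z ≠ 0)
    (hsum : Summable fun i => f' i / (1 + f i z)) :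
    HasDerivAt (fun w => ∏' i, (1 + f i w))
      ((∏' i, (1 + f i z)) * ∑' i, f' i / (1 + f i z)) z := by
  have hm : MultipliableLocallyUniformlyOn (fun i w => 1 + f i w) s :=
    hu.multipliableLocallyUniformlyOn_one_add hs (.of_forall hfu) fun i => (hd i).continuousOn
  have hdiff : DifferentiableOn ℂ (fun w => ∏' i, (1 + f i w)) s :=
    hm.hasProdLocallyUniformlyOn.differentiableOn
      (.of_forall fun _ => by
        simpa [Finset.prod_fn] using DifferentiableOn.finsetProd fun i _ => (hd i).const_add 1) hs
  have hprod : ∏' i, (1 + f i z) ≠ 0 := tprod_one_add_ne_zero_of_summable hne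
    (hu.of_nonneg_of_le (fun _ => norm_nonneg _) fun i => hfu i z hz)
  have hlog (i : ι) : logDeriv (fun w => 1 + f i w) z = f' i / (1 + f i z) := by
    rw [logDeriv_apply, ((hf' i).const_add 1).deriv]
  have key := logDeriv_tprod_eq_tsum hs hz hne (fun i => (hd i).const_add 1)
    (hsum.congr fun i => (hlog i).symm) hm hprod
  simp only [hlog, logDeriv_apply] at key
  rw [← key, mul_div_cancel₀ _ hprod]
  exact (hdiff.differentiableAt (hs.mem_nhds hz)).hasDerivAt

section ReducedTheta

variable {𝕜 : Type*} [NormedField 𝕜] {q x : 𝕜}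

/-- The theta function with its zero at `x = 1` divided out, `(xq; q)_∞ (q/x; q)_∞`. -/
noncomputable def reducedTheta (q x : 𝕜) : 𝕜 := qPochInf q (x * q) * qPochInf q (q / x)

lemma reducedTheta_inv (q x : 𝕜) : reducedTheta q x⁻¹ = reducedTheta q x := by
  rw [reducedTheta, reducedTheta, div_inv_eq_mul, inv_mul_eq_div, mul_comm q, mul_comm]

lemma reducedTheta_one (q : 𝕜) : reducedTheta q 1 = eulerFn q ^ 2 := by
  rw [reducedTheta, one_mul, div_one, eulerFn, sq]

lemma mul_pow_ne_one_of_qPochInf_ne_zero (h : qPochInf q x ≠ 0) (j : ℕ) : x * q ^ j ≠ 1 :=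
  fun hj => h (tprod_of_exists_eq_zero ⟨j, sub_eq_zero.2 hj.symm⟩)

variable [CompleteSpace 𝕜]

lemma qTheta_eq_one_sub_mul (hq : ‖q‖ < 1) (x : 𝕜) : qTheta q x = (1 - x) * reducedTheta q x := by
  rw [qTheta, reducedTheta, qPochInf_eq_one_sub_mul hq x, mul_assoc]

lemma qTheta_inv (hq : ‖q‖ < 1) (hx : x ≠ 0) : qTheta q x⁻¹ = -x⁻¹ * qTheta q x := by
  rw [qTheta_eq_one_sub_mul hq, qTheta_eq_one_sub_mul hq, reducedTheta_inv]
  field_simp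
  ring

lemma qTheta_ne_zero_of_pow_eq_one (hq : ‖q‖ < 1) {N : ℕ} (hN : N ≠ 0) (hx : x ^ N = 1)
    (hx1 : x ≠ 1) : qTheta q x ≠ 0 := by
  have hnorm := norm_eq_one_of_pow_eq_one hN hx
  have hxq : ‖x * q‖ < 1 := by rwa [norm_mul, hnorm, one_mul]
  have hqx : ‖q / x‖ < 1 := by rwa [norm_div, hnorm, div_one]
  rw [qTheta_eq_one_sub_mul hq]
  exact mul_ne_zero (sub_ne_zero.2 hx1.symm) (mul_ne_zero
    (qPochInf_ne_zero_of_norm_lt_one hq hxq) (qPochInf_ne_zero_of_norm_lt_one hq hqx))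

lemma continuousAt_reducedTheta (hq : ‖q‖ < 1) (hx : x ≠ 0) : ContinuousAt (reducedTheta q) x :=
  ((continuous_qPochInf hq).comp (by fun_prop)).continuousAt.mul
    ((continuous_qPochInf hq).continuousAt.comp (by fun_prop (disch := assumption)))

end ReducedTheta

section Koebe

variable {𝕜 : Type*} [NormedField 𝕜] {q x u : 𝕜}

/-- The Koebe function `t / (1 - t)²`, whose `q`-shifts sum to the Weierstrass function. -/
def koebe (t : 𝕜) : 𝕜 := t / (1 - t) ^ 2

/-- The product `∏_j (1 - w κ(x q^j))` over the Koebe function `κ`: for `w = (1 - u)² / u` it is the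
quotient `(xu; q)_∞ (x/u; q)_∞ / (x; q)_∞²`. -/
noncomputable def koebeProd (q x w : 𝕜) : 𝕜 := ∏' j : ℕ, (1 - w * koebe (x * q ^ j))

/-- The multiplicative Weierstrass function `∑_{n ∈ ℤ} κ(x q^n)` of period `q`, up to an additive
constant; the terms with `n < 0` are rewritten by `κ(1/t) = κ(t)`. -/
noncomputable def wpSeries (q x : 𝕜) : 𝕜 :=
  ∑' j : ℕ, koebe (x * q ^ j) + ∑' j : ℕ, koebe (q / x * q ^ j)

lemma one_sub_mul_mul_one_sub_div (hu : u ≠ 0) (hx : x ≠ 1) :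
    (1 - x * u) * (1 - x / u) = (1 - x) ^ 2 * (1 - (1 - u) ^ 2 / u * koebe x) := by
  have := sub_ne_zero.2 hx.symm
  rw [koebe]
  field_simp
  ring

lemma summable_norm_koebe_mul_pow (hq : ‖q‖ < 1) (x : 𝕜) :
    Summable fun j : ℕ => ‖koebe (x * q ^ j)‖ := by
  have lim : Tendsto (fun j : ℕ => x * q ^ j) atTop (𝓝 0) := by
    simpa using (tendsto_pow_atTop_nhds_zero_of_norm_lt_one hq).const_mul x
  have bounded : (fun t : 𝕜 => ((1 - t) ^ 2)⁻¹) =O[𝓝 0] fun _ => (1 : 𝕜) :=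
    (ContinuousAt.tendsto (by fun_prop (disch := simp))).isBigO_one _
  have isBigO_koebe : (fun t : 𝕜 => koebe t) =O[𝓝 0] fun t => t := by
    simpa [koebe, div_eq_mul_inv] using
      (Asymptotics.isBigO_refl (fun t : 𝕜 => t) (𝓝 0)).mul bounded
  exact summable_of_isBigO_nat (summable_norm_mul_pow hq x)
    (isBigO_koebe.comp_tendsto lim).norm_norm

variable [CompleteSpace 𝕜]

lemma qPochInf_mul_mul_qPochInf_div (hq : ‖q‖ < 1) (hu : u ≠ 0) (hx : qPochInf q x ≠ 0) :
    qPochInf q (x * u) * qPochInf q (x / u) =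
      qPochInf q x ^ 2 * koebeProd q x ((1 - u) ^ 2 / u) := by
  have hm : Multipliable fun j : ℕ => 1 - (1 - u) ^ 2 / u * koebe (x * q ^ j) := by
    simp only [sub_eq_add_neg _ (_ * koebe _)]
    refine multipliable_one_add_of_summable ?_
    simpa only [norm_neg, norm_mul] using (summable_norm_koebe_mul_pow hq x).mul_left _
  refine tendsto_nhds_unique ((tendsto_qPoch hq _).mul (tendsto_qPoch hq _))
    ((((tendsto_qPoch hq x).pow 2).mul hm.hasProd.tendsto_prod_nat).congr fun n => ?_)
  simp only [qPoch]
  rw [← prod_pow, ← prod_mul_distrib, ← prod_mul_distrib]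
  refine prod_congr rfl fun j _ => ?_
  rw [← one_sub_mul_mul_one_sub_div hu (mul_pow_ne_one_of_qPochInf_ne_zero hx j), mul_right_comm,
    div_mul_eq_mul_div]

lemma qTheta_mul_mul_qTheta_div (hq : ‖q‖ < 1) (hu : u ≠ 0) (hx : qTheta q x ≠ 0) :
    qTheta q (x * u) * qTheta q (x / u) = qTheta q x ^ 2 *
      (koebeProd q x ((1 - u) ^ 2 / u) * koebeProd q (q / x) ((1 - u) ^ 2 / u)) := by
  rw [qTheta, mul_ne_zero_iff] at hx
  have h₁ := qPochInf_mul_mul_qPochInf_div hq hu hx.1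
  have h₂ := qPochInf_mul_mul_qPochInf_div hq hu hx.2
  simp only [qTheta]
  rw [div_mul_eq_div_div, div_div_eq_mul_div, mul_div_right_comm]
  linear_combination qPochInf q (q / x / u) * qPochInf q (q / x * u) * h₁ +
    qPochInf q x ^ 2 * koebeProd q x ((1 - u) ^ 2 / u) * h₂

end Koebe

section WeierstrassDifference

variable {q x y : ℂ}

lemma hasDerivAt_koebeProd_zero (hq : ‖q‖ < 1) (x : ℂ) :
    HasDerivAt (fun w => koebeProd q x w) (-∑' j : ℕ, koebe (x * q ^ j)) 0 := by
  have hs := summable_norm_koebe_mul_pow hq x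
  have key := hasDerivAt_tprod_one_add (f := fun (j : ℕ) w => -(w * koebe (x * q ^ j)))
    (f' := fun j => -koebe (x * q ^ j)) Metric.isOpen_ball (Metric.mem_ball_self one_pos) hs
    (fun j w hw => by
      rw [norm_neg, norm_mul]
      exact mul_le_of_le_one_left (norm_nonneg _) (mem_ball_zero_iff.1 hw).le)
    (fun j => by fun_prop)
    (fun j => by simpa using ((hasDerivAt_id' (0 : ℂ)).mul_const (koebe (x * q ^ j))).fun_neg)
    (fun j => by simp) (by simpa using hs.of_norm.neg)
  simpa [koebeProd, ← sub_eq_add_neg, tsum_neg] using key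

lemma hasDerivAt_koebeProd_mul_koebeProd_zero (hq : ‖q‖ < 1) (x : ℂ) :
    HasDerivAt (fun w => koebeProd q x w * koebeProd q (q / x) w) (-wpSeries q x) 0 := by
  have at_zero (t : ℂ) : koebeProd q t 0 = 1 := by simp [koebeProd]
  refine ((hasDerivAt_koebeProd_zero hq x).mul
    (hasDerivAt_koebeProd_zero hq (q / x))).congr_deriv ?_
  rw [at_zero, at_zero, wpSeries]
  ring

lemma tendsto_sq_one_sub_div :
    Tendsto (fun u : ℂ => (1 - u) ^ 2 / u) (𝓝[≠] 1) (𝓝[≠] 0) := by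
  refine tendsto_nhdsWithin_iff.2 ⟨?_, ?_⟩
  · have : ContinuousAt (fun u : ℂ => (1 - u) ^ 2 / u) 1 := by fun_prop (disch := simp)
    simpa using this.tendsto.mono_left nhdsWithin_le_nhds
  · filter_upwards [self_mem_nhdsWithin, eventually_ne_nhdsWithin (one_ne_zero (α := ℂ))]
      with u hu hu0
    exact div_ne_zero (pow_ne_zero 2 (sub_ne_zero.2 (Ne.symm hu))) hu0

/-- The addition formula with `v = 1` becomes this difference formula in the limit `u → 1`. -/
theorem qTheta_mul_qTheta_div_eq_wpSeries_sub (hq0 : q ≠ 0) (hq : ‖q‖ < 1) (hx0 : x ≠ 0)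
    (hy0 : y ≠ 0) (hx : qTheta q x ≠ 0) (hy : qTheta q y ≠ 0) :
    y * (qTheta q (x * y) * qTheta q (x / y)) * eulerFn q ^ 4 =
      qTheta q x ^ 2 * qTheta q y ^ 2 * (wpSeries q y - wpSeries q x) := by
  set w : ℂ → ℂ := fun u => (1 - u) ^ 2 / u
  set F : ℂ → ℂ := fun t => koebeProd q x t * koebeProd q (q / x) t -
    koebeProd q y t * koebeProd q (q / y) t
  have lim_left : Tendsto
      (fun u => y * (qTheta q (x * y) * qTheta q (x / y)) * reducedTheta q u ^ 2) (𝓝[≠] 1)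
      (𝓝 (y * (qTheta q (x * y) * qTheta q (x / y)) * eulerFn q ^ 4)) := by
    have := (continuousAt_reducedTheta hq one_ne_zero).tendsto
    rw [reducedTheta_one] at this
    simpa only [← pow_mul] using ((this.pow 2).const_mul _).mono_left nhdsWithin_le_nhds
  have hF : HasDerivAt F (wpSeries q y - wpSeries q x) 0 := by
    refine ((hasDerivAt_koebeProd_mul_koebeProd_zero hq x).sub
      (hasDerivAt_koebeProd_mul_koebeProd_zero hq y)).congr_deriv ?_
    ring
  have lim_right := ((hasDerivAt_iff_tendsto_slope.1 hF).comp tendsto_sq_one_sub_div).const_mul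
    (qTheta q x ^ 2 * qTheta q y ^ 2)
  refine tendsto_nhds_unique lim_left (lim_right.congr' ?_)
  filter_upwards [self_mem_nhdsWithin, eventually_ne_nhdsWithin (one_ne_zero (α := ℂ))]
    with u hu hu0
  have hu1 : 1 - u ≠ 0 := sub_ne_zero.2 (Ne.symm hu)
  have addition := qTheta_weierstrass hq0 hq hx0 hy0 hu0 one_ne_zero
  simp only [mul_one, div_one] at addition
  rw [qTheta_mul_mul_qTheta_div hq hu0 hx, qTheta_mul_mul_qTheta_div hq hu0 hy,
    qTheta_eq_one_sub_mul hq u] at addition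
  have F_zero : F 0 = 0 := by simp [F, koebeProd]
  simp only [Function.comp_apply, slope_def_field, F_zero, sub_zero, F]
  field_simp
  linear_combination -addition

end WeierstrassDifference

section ReducedDifference

variable {q x y : ℂ}

theorem reducedTheta_mul_reducedTheta_div_eq_wpSeries_sub (hq0 : q ≠ 0) (hq : ‖q‖ < 1)
    (hx0 : x ≠ 0) (hy0 : y ≠ 0) (hx : qTheta q x ≠ 0) (hy : qTheta q y ≠ 0) :
    (koebe y - koebe x) * (reducedTheta q (x * y) * reducedTheta q (x / y)) * eulerFn q ^ 4 =
      reducedTheta q x ^ 2 * reducedTheta q y ^ 2 * (wpSeries q y - wpSeries q x) := by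
  have difference := qTheta_mul_qTheta_div_eq_wpSeries_sub hq0 hq hx0 hy0 hx hy
  simp only [qTheta_eq_one_sub_mul hq] at difference hx hy
  have hx1 := left_ne_zero_of_mul hx
  have hy1 := left_ne_zero_of_mul hy
  have factor : y * ((1 - x * y) * (1 - x / y)) =
      (1 - x) ^ 2 * (1 - y) ^ 2 * (koebe y - koebe x) := by
    simp only [koebe]
    field_simp
    ring
  refine mul_left_cancel₀ (mul_ne_zero (pow_ne_zero 2 hx1) (pow_ne_zero 2 hy1)) ?_
  linear_combination difference -
    reducedTheta q (x * y) * reducedTheta q (x / y) * eulerFn q ^ 4 * factor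

end ReducedDifference

/-! ### Lambert series -/

section Lambert

variable {𝕜 : Type*} [NormedField 𝕜] {q x : 𝕜}

/-- The term `m q^m / (1 - q^m)` of the Lambert series, which vanishes for `m = 0`. -/
def lambertTerm (q : 𝕜) (m : ℕ) : 𝕜 := m * q ^ m / (1 - q ^ m)

/-- The part of the Lambert series over the indices `m ≥ a` congruent to `a` modulo `N`. -/
noncomputable def lambertClass (N a : ℕ) (q : 𝕜) : 𝕜 := ∑' j : ℕ, lambertTerm q (a + N * j)

variable [CompleteSpace 𝕜]

lemma summable_lambertTerm_mul {x : 𝕜} (hq : ‖q‖ < 1) (hxq : ‖x * q‖ < 1) :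
    Summable fun m => x ^ m * lambertTerm q m := by
  have lim : Tendsto (fun m : ℕ => (1 - q ^ m)⁻¹) atTop (𝓝 1) := by
    simpa using ((tendsto_pow_atTop_nhds_zero_of_norm_lt_one hq).const_sub 1).inv₀ (by simp)
  have factor (m : ℕ) :
      x ^ m * lambertTerm q m = (m : 𝕜) ^ 1 * (x * q) ^ m * (1 - q ^ m)⁻¹ := by
    rw [lambertTerm]
    ring
  have isBigO := (Asymptotics.isBigO_refl (fun m : ℕ => (m : 𝕜) ^ 1 * (x * q) ^ m) atTop).mul
    (lim.isBigO_one 𝕜)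
  simp only [mul_one, ← factor] at isBigO
  exact summable_of_isBigO_nat (summable_norm_pow_mul_geometric_of_norm_lt_one 1 hxq)
    isBigO.norm_right

lemma summable_lambertTerm (hq : ‖q‖ < 1) : Summable (lambertTerm q) := by
  simpa using summable_lambertTerm_mul (x := 1) hq (by simpa using hq)

lemma tsum_koebe_mul_pow (hq : ‖q‖ < 1) (hx : ‖x * q‖ < 1) :
    ∑' j : ℕ, koebe (x * q * q ^ j) = ∑' m : ℕ, x ^ m * lambertTerm q m := by
  have expand_koebe (j : ℕ) : koebe (x * q * q ^ j) = ∑' m : ℕ, m * (x * q * q ^ j) ^ m := by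
    have hlt : ‖x * q * q ^ j‖ < 1 := by
      rw [norm_mul _ (q ^ j), norm_pow]
      exact mul_lt_one_of_nonneg_of_lt_one_left (norm_nonneg _) hx
        (pow_le_one₀ (norm_nonneg _) hq.le)
    exact (hasSum_coe_mul_geometric_of_norm_lt_one hlt).tsum_eq.symm
  have expand_lambert (m : ℕ) :
      x ^ m * lambertTerm q m = ∑' j : ℕ, m * (x * q * q ^ j) ^ m := by
    rcases eq_or_ne m 0 with rfl | hm
    · simp [lambertTerm]
    · have := tsum_geometric_of_norm_lt_one (norm_pow_lt_one hq hm)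
      simp only [mul_pow _ (q ^ _), ← mul_assoc, pow_right_comm q _ m, tsum_mul_left, this,
        lambertTerm]
      ring
  let term (m j : ℕ) : 𝕜 := m * (x * q * q ^ j) ^ m
  have summable_pair : Summable (Function.uncurry term) := by
    have dominated :
        Summable fun p : ℕ × ℕ => ‖(p.1 : 𝕜) ^ 1 * (x * q) ^ p.1‖ * ‖q‖ ^ p.2 :=
      (summable_norm_pow_mul_geometric_of_norm_lt_one 1 hx).mul_of_nonneg
        (summable_geometric_of_lt_one (norm_nonneg q) hq) (fun _ => norm_nonneg _)
        fun _ => by positivity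
    refine .of_norm_bounded dominated ?_
    rintro ⟨m, j⟩
    rcases eq_or_ne m 0 with rfl | hm
    · simp [term]
    · simp only [term, Function.uncurry_apply_pair, mul_pow _ (q ^ _), ← mul_assoc,
        norm_mul _ ((q ^ _) ^ _), pow_one]
      gcongr
      rw [norm_pow, norm_pow]
      exact pow_le_of_le_one (by positivity) (pow_le_one₀ (norm_nonneg _) hq.le) hm
  simp only [expand_koebe, expand_lambert]
  exact summable_pair.tsum_comm

lemma tsum_pow_mul_lambertTerm {N : ℕ} (hN : N ≠ 0) (hq : ‖q‖ < 1) (hx : x ^ N = 1) :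
    ∑' m : ℕ, x ^ m * lambertTerm q m = ∑ a ∈ range N, x ^ a * lambertClass N a q := by
  have summable_all : Summable fun m : ℕ => x ^ m * lambertTerm q m :=
    summable_lambertTerm_mul hq (by rwa [norm_mul, norm_eq_one_of_pow_eq_one hN hx, one_mul])
  have : NeZero N := ⟨hN⟩
  rw [Nat.sumByResidueClasses summable_all N]
  simp only [pow_add, pow_mul, hx, one_pow, mul_one, tsum_mul_left]
  obtain ⟨n, rfl⟩ := Nat.exists_eq_succ_of_ne_zero hN
  exact Fin.sum_univ_eq_sum_range (fun a => x ^ a * lambertClass (n + 1) a q) (n + 1)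

theorem wpSeries_of_pow_eq_one {N : ℕ} (hN : N ≠ 0) (hq : ‖q‖ < 1) (hx : x ^ N = 1) :
    wpSeries q x = koebe x + ∑ a ∈ range N, (x ^ a + x⁻¹ ^ a) * lambertClass N a q := by
  have hx' : x⁻¹ ^ N = 1 := by rw [inv_pow, hx, inv_one]
  have lambert {t : 𝕜} (ht : t ^ N = 1) : ∑' j : ℕ, koebe (t * q * q ^ j) =
      ∑ a ∈ range N, t ^ a * lambertClass N a q := by
    rw [tsum_koebe_mul_pow hq (by rwa [norm_mul, norm_eq_one_of_pow_eq_one hN ht, one_mul]),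
      tsum_pow_mul_lambertTerm hN hq ht]
  have head : ∑' j : ℕ, koebe (x * q ^ j) = koebe x + ∑' j : ℕ, koebe (x * q * q ^ j) := by
    rw [(summable_norm_koebe_mul_pow hq x).of_norm.tsum_eq_zero_add, pow_zero, mul_one]
    simp only [pow_succ', mul_assoc]
  rw [wpSeries, head, lambert hx, ← inv_mul_eq_div, lambert hx']
  simp only [add_mul, sum_add_distrib, add_assoc]

end Lambert

section LogDerivative

variable {z : ℂ} {N a : ℕ}

lemma hasDerivAt_qPochInf_pow (hz0 : z ≠ 0) (hz : ‖z‖ < 1) (hN : N ≠ 0) (ha : a ≠ 0) :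
    HasDerivAt (fun w => qPochInf (w ^ N) (w ^ a))
      (-(qPochInf (z ^ N) (z ^ a) * lambertClass N a z / z)) z := by
  obtain ⟨r, hzr, hr⟩ := exists_between hz
  have hr0 : 0 ≤ r := (norm_nonneg z).trans hzr.le
  have index_inj : Function.Injective fun j => a + N * j := fun i j h => by simpa [hN] using h
  have product (w : ℂ) : qPochInf (w ^ N) (w ^ a) = ∏' j : ℕ, (1 + -w ^ (a + N * j)) := by
    simp only [qPochInf, pow_add, pow_mul, sub_eq_add_neg]
  have log_term (j : ℕ) : -((a + N * j : ℕ) * z ^ (a + N * j - 1)) / (1 + -z ^ (a + N * j)) =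
      -z⁻¹ * lambertTerm z (a + N * j) := by
    rw [lambertTerm, ← sub_eq_add_neg, ← pow_sub_one_mul (show a + N * j ≠ 0 by omega) z]
    field_simp
  have key := hasDerivAt_tprod_one_add (f := fun (j : ℕ) w => -w ^ (a + N * j))
    (f' := fun j => -((a + N * j : ℕ) * z ^ (a + N * j - 1))) (s := Metric.ball 0 r)
    Metric.isOpen_ball (mem_ball_zero_iff.2 hzr)
    ((summable_geometric_of_lt_one hr0 hr).comp_injective index_inj)
    (fun j w hw => by
      rw [norm_neg, norm_pow]
      exact pow_le_pow_left₀ (norm_nonneg _) (mem_ball_zero_iff.1 hw).le _)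
    (fun j => by fun_prop) (fun j => (hasDerivAt_pow _ z).fun_neg)
    (fun j => by
      rw [← sub_eq_add_neg]
      exact one_sub_ne_zero_of_norm_lt_one (norm_pow_lt_one hz (by omega)))
    (by
      simp only [log_term]
      exact ((summable_lambertTerm hz).comp_injective index_inj).mul_left _)
  simp only [log_term, ← product, tsum_mul_left] at key
  refine key.congr_deriv ?_
  rw [lambertClass]
  ring

theorem hasDerivAt_qTheta_pow (hz0 : z ≠ 0) (hz : ‖z‖ < 1) (ha : a ≠ 0) (haN : a < N) :
    HasDerivAt (fun w => qTheta (w ^ N) (w ^ a))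
      (-(qTheta (z ^ N) (z ^ a) * (lambertClass N a z + lambertClass N (N - a) z) / z)) z := by
  have hN : N ≠ 0 := by omega
  refine (((hasDerivAt_qPochInf_pow hz0 hz hN ha).mul
    (hasDerivAt_qPochInf_pow hz0 hz hN (by omega : N - a ≠ 0))).congr_of_eventuallyEq
    ?_).congr_deriv ?_
  · filter_upwards [eventually_ne_nhds hz0] with w hw using qTheta_pow_eq_mul hw haN.le
  · rw [qTheta_pow_eq_mul hz0 haN.le]
    ring

end LogDerivative

/-! ### Level ten -/

section LevelTen

variable {𝕜 : Type*} [NormedField 𝕜] {q : 𝕜}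

/-- Ramanujan's level-10 function over a normed field, written as a theta quotient; over `ℝ` it is
`ramK`. -/
noncomputable def levelTenK (q : 𝕜) : 𝕜 :=
  q * (qTheta (q ^ 10) q * qTheta (q ^ 10) (q ^ 2)) /
    (qTheta (q ^ 10) (q ^ 3) * qTheta (q ^ 10) (q ^ 4))

/-- The coefficient `(-1)^(m+1) (m/5)` of the level-10 Lambert series, which has period 10. -/
def levelTenSign (m : ℕ) : ℤ := (-1) ^ (m + 1) * jacobiSym m 5

/-- The Lambert series `1 - ∑_m ε(m) m q^m / (1 - q^m)` with `ε = levelTenSign`, grouped by residue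
classes modulo 10. It is the derivative of `log k(q)` with respect to `log q`. -/
noncomputable def levelTenLambert (q : 𝕜) : 𝕜 :=
  1 - ∑ a ∈ range 10, levelTenSign a * lambertClass 10 a q

variable [CompleteSpace 𝕜]

lemma eulerFn_eq_qPochInf_sq_mul (hq : ‖q‖ < 1) :
    eulerFn q = qPochInf (q ^ 2) q * eulerFn (q ^ 2) := by
  rw [eulerFn, qPochInf_dissection hq q two_ne_zero, prod_range_succ, prod_range_one, pow_zero,
    mul_one, pow_one, eulerFn, sq q]

lemma qPochInf_sq_eq_qTheta_mul_qTheta (hq0 : q ≠ 0) (hq : ‖q‖ < 1) :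
    qPochInf (q ^ 2) q =
      qTheta (q ^ 10) q * qTheta (q ^ 10) (q ^ 3) * qPochInf (q ^ 10) (q ^ 5) := by
  have theta_one := qTheta_pow_eq_mul hq0 (show 1 ≤ 10 by norm_num)
  rw [pow_one] at theta_one
  rw [qPochInf_dissection (norm_pow_lt_one hq two_ne_zero) q (n := 5) (by norm_num), theta_one,
    qTheta_pow_eq_mul hq0 (by norm_num)]
  simp only [prod_range_succ, prod_range_zero, ← pow_mul, ← pow_succ']
  norm_num
  ring

lemma qTheta_level_ten_relation (hq0 : q ≠ 0) (hq : ‖q‖ < 1) :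
    qTheta (q ^ 10) (q ^ 3) ^ 2 * qTheta (q ^ 10) (q ^ 4) ^ 2 -
        q ^ 2 * (qTheta (q ^ 10) q ^ 2 * qTheta (q ^ 10) (q ^ 2) ^ 2) =
      qTheta (q ^ 10) (q ^ 2) * qTheta (q ^ 10) (q ^ 4) * qTheta (q ^ 10) (q ^ 5) ^ 2 := by
  have hnome0 : q ^ 10 ≠ 0 := pow_ne_zero 10 hq0
  have hnome := norm_pow_lt_one hq (show 10 ≠ 0 by norm_num)
  have addition := qTheta_weierstrass hnome0 hnome (x := q⁻¹) (y := q ^ 5) (u := q ^ 3) (v := 1)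
    (inv_ne_zero hq0) (pow_ne_zero 5 hq0) (pow_ne_zero 3 hq0) one_ne_zero
  have theta_six : qTheta (q ^ 10) (q ^ 6) = qTheta (q ^ 10) (q ^ 4) := by
    rw [← qTheta_div hnome0 (q ^ 4)]
    congr 1
    field_simp
  have theta_eight : qTheta (q ^ 10) (q ^ 8) = qTheta (q ^ 10) (q ^ 2) := by
    rw [← qTheta_div hnome0 (q ^ 2)]
    congr 1
    field_simp
  rw [show q⁻¹ * q ^ 5 = q ^ 4 by field_simp, show q⁻¹ / q ^ 5 = (q ^ 6)⁻¹ by field_simp,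
    show q⁻¹ * q ^ 3 = q ^ 2 by field_simp, show q⁻¹ / q ^ 3 = (q ^ 4)⁻¹ by field_simp,
    show q ^ 5 * q ^ 3 = q ^ 8 by ring, show q ^ 5 / q ^ 3 = q ^ 2 by field_simp] at addition
  simp only [mul_one, div_one, qTheta_inv hnome (pow_ne_zero _ hq0), qTheta_inv hnome hq0,
    theta_six, theta_eight] at addition
  field_simp at addition
  linear_combination -addition

lemma levelTenK_ne_zero (hq0 : q ≠ 0) (hq : ‖q‖ < 1) : levelTenK q ≠ 0 := by
  have theta_ne {a : ℕ} (ha : a ≠ 0) (ha10 : a < 10) := qTheta_pow_ne_zero hq0 hq ha ha10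
  have theta_one_ne := theta_ne (a := 1) (by norm_num) (by norm_num)
  rw [pow_one] at theta_one_ne
  exact div_ne_zero
    (mul_ne_zero hq0 (mul_ne_zero theta_one_ne (theta_ne (by norm_num) (by norm_num))))
    (mul_ne_zero (theta_ne (by norm_num) (by norm_num)) (theta_ne (by norm_num) (by norm_num)))

theorem inv_levelTenK_sub_levelTenK (hq0 : q ≠ 0) (hq : ‖q‖ < 1) :
    (levelTenK q)⁻¹ - levelTenK q =
      eulerFn (q ^ 2) * eulerFn (q ^ 5) ^ 5 / (q * eulerFn q * eulerFn (q ^ 10) ^ 5) := by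
  have hnome := norm_pow_lt_one hq (show 10 ≠ 0 by norm_num)
  have theta_ne {a : ℕ} (ha : a ≠ 0) (ha10 : a < 10) := qTheta_pow_ne_zero hq0 hq ha ha10
  have h₁ := theta_ne (a := 1) (by norm_num) (by norm_num)
  have h₂ := theta_ne (a := 2) (by norm_num) (by norm_num)
  have h₃ := theta_ne (a := 3) (by norm_num) (by norm_num)
  have h₄ := theta_ne (a := 4) (by norm_num) (by norm_num)
  rw [pow_one] at h₁
  have hE₂ := eulerFn_ne_zero (norm_pow_lt_one hq two_ne_zero)
  have hE₁₀ := eulerFn_ne_zero hnome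
  have theta_five : qTheta (q ^ 10) (q ^ 5) = qPochInf (q ^ 10) (q ^ 5) ^ 2 := by
    rw [qTheta_pow_eq_mul hq0 (by norm_num), sq]
  have euler_five : eulerFn (q ^ 5) = qPochInf (q ^ 10) (q ^ 5) * eulerFn (q ^ 10) := by
    rw [eulerFn_eq_qPochInf_sq_mul (norm_pow_lt_one hq (by norm_num)), ← pow_mul]
  have relation := qTheta_level_ten_relation hq0 hq
  rw [theta_five] at relation
  rw [eulerFn_eq_qPochInf_sq_mul hq, qPochInf_sq_eq_qTheta_mul_qTheta hq0 hq, euler_five, levelTenK]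
  field_simp
  linear_combination relation

end LevelTen

lemma cyclotomic_ten_of_isPrimitiveRoot {R : Type*} [CommRing R] [IsDomain R] {ζ : R}
    (hζ : IsPrimitiveRoot ζ 10) : ζ ^ 4 - ζ ^ 3 + ζ ^ 2 - ζ + 1 = 0 := by
  have sub_ne {k : ℕ} (hk : k ≠ 0) (hk10 : k < 10) : ζ ^ k - 1 ≠ 0 :=
    sub_ne_zero.2 (hζ.pow_ne_one_of_pos_of_lt hk hk10)
  refine (mul_eq_zero.1 ?_).resolve_left
    (mul_ne_zero (sub_ne two_ne_zero (by norm_num)) (sub_ne (k := 5) (by norm_num) (by norm_num)))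
  linear_combination (ζ - 1) * hζ.pow_eq_one

section Evaluation

variable {𝕜 : Type*} [NormedField 𝕜] {q ζ : 𝕜}

lemma koebe_cube_sub_koebe (hζ : IsPrimitiveRoot ζ 10) :
    koebe (ζ ^ 3) - koebe ζ = ζ + ζ⁻¹ - (ζ ^ 3 + (ζ ^ 3)⁻¹) := by
  have cyclotomic := cyclotomic_ten_of_isPrimitiveRoot hζ
  have h1 : 1 - ζ ≠ 0 := sub_ne_zero.2 (hζ.ne_one (by norm_num)).symm
  have h3 : 1 - ζ ^ 3 ≠ 0 :=
    sub_ne_zero.2 (hζ.pow_ne_one_of_pos_of_lt (by norm_num) (by norm_num)).symm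
  have h0 := hζ.ne_zero (by norm_num)
  rw [koebe, koebe]
  field_simp
  grind

lemma koebe_cube_sub_koebe_sq (hζ : IsPrimitiveRoot ζ 10) :
    (koebe (ζ ^ 3) - koebe ζ) ^ 2 = 5 := by
  have cyclotomic := cyclotomic_ten_of_isPrimitiveRoot hζ
  have h0 := hζ.ne_zero (by norm_num)
  rw [koebe_cube_sub_koebe hζ]
  field_simp
  grind

lemma cube_pow_add_inv_sub_pow_add_inv (hζ : IsPrimitiveRoot ζ 10) {a : ℕ} (ha : a < 10) :
    (ζ ^ 3) ^ a + (ζ ^ 3)⁻¹ ^ a - (ζ ^ a + ζ⁻¹ ^ a) =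
      -((koebe (ζ ^ 3) - koebe ζ) * levelTenSign a) := by
  have cyclotomic := cyclotomic_ten_of_isPrimitiveRoot hζ
  have inv_eq : ζ⁻¹ = -ζ ^ 4 :=
    inv_eq_of_mul_eq_one_right (by linear_combination (-1 - ζ) * cyclotomic)
  rw [koebe_cube_sub_koebe hζ, ← inv_pow, inv_eq, levelTenSign]
  interval_cases a <;> norm_num <;> grind

lemma wpSeries_cube_sub_wpSeries [CompleteSpace 𝕜] (hζ : IsPrimitiveRoot ζ 10) (hq : ‖q‖ < 1) :
    wpSeries q (ζ ^ 3) - wpSeries q ζ = (koebe (ζ ^ 3) - koebe ζ) * levelTenLambert q := by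
  have hζ3 : (ζ ^ 3) ^ 10 = 1 := by rw [pow_right_comm, hζ.pow_eq_one, one_pow]
  rw [wpSeries_of_pow_eq_one (by norm_num) hq hζ.pow_eq_one,
    wpSeries_of_pow_eq_one (by norm_num) hq hζ3, add_sub_add_comm, ← sum_sub_distrib,
    levelTenLambert, mul_one_sub, sub_eq_add_neg (_ - _) (_ * _), mul_sum, ← sum_neg_distrib]
  congr 1
  refine sum_congr rfl fun a ha => ?_
  linear_combination
    lambertClass 10 a q * cube_pow_add_inv_sub_pow_add_inv hζ (mem_range.1 ha)

lemma reducedTheta_pow {n a : ℕ} (hζ : ζ ^ n = 1) (ha : a ≤ n) :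
    reducedTheta q (ζ ^ a) = qPochInf q (q * ζ ^ a) * qPochInf q (q * ζ ^ (n - a)) := by
  have inv_eq : (ζ ^ a)⁻¹ = ζ ^ (n - a) :=
    inv_eq_of_mul_eq_one_right (by rw [← pow_add, Nat.add_sub_cancel' ha, hζ])
  rw [reducedTheta, mul_comm (ζ ^ a), div_eq_mul_inv, inv_eq]

variable [CompleteSpace 𝕜]

lemma eulerFn_mul_reducedTheta_mul_reducedTheta (hζ : IsPrimitiveRoot ζ 5) (hq : ‖q‖ < 1) :
    eulerFn q * (reducedTheta q ζ * reducedTheta q (ζ ^ 2)) = eulerFn (q ^ 5) := by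
  have expand_one := reducedTheta_pow (q := q) hζ.pow_eq_one (show 1 ≤ 5 by norm_num)
  have expand_two := reducedTheta_pow (q := q) hζ.pow_eq_one (show 2 ≤ 5 by norm_num)
  rw [pow_one] at expand_one
  rw [expand_one, expand_two, eulerFn, eulerFn, ← prod_qPochInf_mul_pow hq q hζ (by norm_num)]
  simp only [prod_range_succ, prod_range_zero, pow_zero, pow_one, mul_one, one_mul]
  ring

lemma reducedTheta_mul_reducedTheta_cube (hζ : IsPrimitiveRoot ζ 10) (hq : ‖q‖ < 1) :
    reducedTheta q ζ * reducedTheta q (ζ ^ 3) * (eulerFn (q ^ 2) * eulerFn (q ^ 5)) =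
      eulerFn q * eulerFn (q ^ 10) := by
  have expand {a : ℕ} (ha : a ≤ 10) := reducedTheta_pow (q := q) hζ.pow_eq_one ha
  have expand_one := expand (a := 1) (by norm_num)
  have order_two : IsPrimitiveRoot (ζ ^ 5) 2 := hζ.pow (by norm_num) (by norm_num)
  have order_five : IsPrimitiveRoot (ζ ^ 2) 5 := hζ.pow (by norm_num) (by norm_num)
  rw [pow_one] at expand_one
  simp only [eulerFn]
  rw [expand_one, expand (by norm_num), ← prod_qPochInf_mul_pow hq q order_two (by norm_num),
    ← prod_qPochInf_mul_pow hq q order_five (by norm_num),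
    ← prod_qPochInf_mul_pow hq q hζ (by norm_num)]
  simp only [prod_range_succ, prod_range_zero, pow_zero, pow_one, mul_one, one_mul, ← pow_mul,
    Nat.reduceMul, Nat.reduceSub]
  ring

end Evaluation

section Derivative

variable {q : ℂ}

lemma reducedTheta_mul_eulerFn_pow_four {ζ : ℂ} (hζ : IsPrimitiveRoot ζ 10) (hq0 : q ≠ 0)
    (hq : ‖q‖ < 1) :
    reducedTheta q (ζ ^ 2) * reducedTheta q (ζ ^ 4) * eulerFn q ^ 4 =
      (reducedTheta q ζ * reducedTheta q (ζ ^ 3)) ^ 2 * levelTenLambert q := by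
  have hζ0 := hζ.ne_zero (by norm_num)
  have hζ3 : (ζ ^ 3) ^ 10 = 1 := by rw [pow_right_comm, hζ.pow_eq_one, one_pow]
  have hκ : koebe (ζ ^ 3) - koebe ζ ≠ 0 := fun h => by
    simpa [h] using koebe_cube_sub_koebe_sq hζ
  have difference := reducedTheta_mul_reducedTheta_div_eq_wpSeries_sub hq0 hq hζ0
    (pow_ne_zero 3 hζ0)
    (qTheta_ne_zero_of_pow_eq_one hq (by norm_num) hζ.pow_eq_one (hζ.ne_one (by norm_num)))
    (qTheta_ne_zero_of_pow_eq_one hq (by norm_num) hζ3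
      (hζ.pow_ne_one_of_pos_of_lt (by norm_num) (by norm_num)))
  rw [wpSeries_cube_sub_wpSeries hζ hq, ← pow_succ', show ζ / ζ ^ 3 = (ζ ^ 2)⁻¹ by field_simp,
    reducedTheta_inv] at difference
  exact mul_left_cancel₀ hκ (by linear_combination difference)

theorem levelTenLambert_eq (hq0 : q ≠ 0) (hq : ‖q‖ < 1) :
    levelTenLambert q =
      eulerFn q * eulerFn (q ^ 2) ^ 2 * eulerFn (q ^ 5) ^ 3 / eulerFn (q ^ 10) ^ 2 := by
  obtain ⟨ζ, hζ⟩ : ∃ ζ : ℂ, IsPrimitiveRoot ζ 10 :=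
    ⟨_, Complex.isPrimitiveRoot_exp 10 (by norm_num)⟩
  have h₁ := eulerFn_ne_zero hq
  have h₂ := eulerFn_ne_zero (norm_pow_lt_one hq two_ne_zero)
  have h₅ := eulerFn_ne_zero (norm_pow_lt_one hq (show 5 ≠ 0 by norm_num))
  have h₁₀ := eulerFn_ne_zero (norm_pow_lt_one hq (show 10 ≠ 0 by norm_num))
  have even_powers := eulerFn_mul_reducedTheta_mul_reducedTheta
    (hζ.pow (by norm_num) (show 10 = 2 * 5 by norm_num)) hq
  have odd_powers := eq_div_of_mul_eq (mul_ne_zero h₂ h₅)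
    (reducedTheta_mul_reducedTheta_cube hζ hq)
  rw [← pow_mul] at even_powers
  have solved : eulerFn (q ^ 5) * eulerFn q ^ 4 = eulerFn q *
      ((eulerFn q * eulerFn (q ^ 10) / (eulerFn (q ^ 2) * eulerFn (q ^ 5))) ^ 2 *
        levelTenLambert q) := by
    rw [← odd_powers, ← even_powers]
    linear_combination eulerFn q * reducedTheta_mul_eulerFn_pow_four hζ hq0 hq
  field_simp at solved ⊢
  linear_combination -solved

theorem hasDerivAt_levelTenK (hq0 : q ≠ 0) (hq : ‖q‖ < 1) :
    HasDerivAt levelTenK (levelTenK q / q * levelTenLambert q) q := by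
  have deriv {a : ℕ} (ha : a ≠ 0) (ha10 : a < 10) := hasDerivAt_qTheta_pow hq0 hq ha ha10
  have deriv_one := deriv one_ne_zero (by norm_num)
  simp only [pow_one] at deriv_one
  have h₃ := qTheta_pow_ne_zero hq0 hq (N := 10) (a := 3) (by norm_num) (by norm_num)
  have h₄ := qTheta_pow_ne_zero hq0 hq (N := 10) (a := 4) (by norm_num) (by norm_num)
  have quotient := ((hasDerivAt_id' q).mul (deriv_one.mul (deriv two_ne_zero (by norm_num)))).div
    ((deriv (a := 3) (by norm_num) (by norm_num)).mul
      (deriv (a := 4) (by norm_num) (by norm_num))) (mul_ne_zero h₃ h₄)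
  refine quotient.congr_deriv ?_
  simp only [levelTenK, levelTenLambert, levelTenSign, sum_range_succ, sum_range_zero, Pi.mul_apply]
  norm_num
  field_simp
  ring

theorem hasDerivAt_neg_one_add_levelTenK_sq_div (hq0 : q ≠ 0) (hq : ‖q‖ < 1) :
    HasDerivAt (fun z => -((1 + levelTenK z ^ 2) / levelTenK z))
      (eulerFn (q ^ 2) ^ 3 * eulerFn (q ^ 5) ^ 8 / (q ^ 2 * eulerFn (q ^ 10) ^ 7)) q := by
  have hK := levelTenK_ne_zero hq0 hq
  have hE := eulerFn_ne_zero hq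
  have deriv := hasDerivAt_levelTenK hq0 hq
  refine (((deriv.fun_pow 2).const_add 1).fun_div deriv hK).fun_neg.congr_deriv ?_
  calc _ = ((levelTenK q)⁻¹ - levelTenK q) * (levelTenLambert q / q) := by
        field_simp
        ring
    _ = _ := by
        rw [inv_levelTenK_sub_levelTenK hq0 hq, levelTenLambert_eq hq0 hq]
        field_simp

end Derivative

/-! ### Restriction to the real line -/

section RealTransfer

variable {q : ℝ}

lemma ofReal_qPochInf (hq : ‖q‖ < 1) (x : ℝ) :
    ((qPochInf q x : ℝ) : ℂ) = qPochInf (q : ℂ) x := by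
  have hq' : ‖(q : ℂ)‖ < 1 := by rwa [Complex.norm_real]
  refine tendsto_nhds_unique ((Complex.continuous_ofReal.tendsto _).comp (tendsto_qPoch hq x))
    ((tendsto_qPoch hq' x).congr fun n => ?_)
  simp [qPoch]

lemma ofReal_qTheta (hq : ‖q‖ < 1) (x : ℝ) :
    ((qTheta q x : ℝ) : ℂ) = qTheta (q : ℂ) x := by
  rw [qTheta, qTheta, Complex.ofReal_mul, ofReal_qPochInf hq, ofReal_qPochInf hq,
    Complex.ofReal_div]

lemma ofReal_levelTenK (hq : ‖q‖ < 1) :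
    ((levelTenK q : ℝ) : ℂ) = levelTenK (q : ℂ) := by
  have hnome := norm_pow_lt_one hq (show 10 ≠ 0 by norm_num)
  simp only [levelTenK, Complex.ofReal_mul, Complex.ofReal_div, ofReal_qTheta hnome,
    Complex.ofReal_pow]

lemma eulerE_eq_eulerFn (q : ℝ) : eulerE q = eulerFn q := by
  simp only [eulerE, eulerFn, qPochInf, pow_succ']

lemma ofReal_eulerE (hq : ‖q‖ < 1) : (eulerE q : ℂ) = eulerFn (q : ℂ) := by
  rw [eulerE_eq_eulerFn, eulerFn, ofReal_qPochInf hq, eulerFn]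

lemma ramK_eq_levelTenK (hq0 : q ≠ 0) (hq : ‖q‖ < 1) : ramK q = levelTenK q := by
  have factor (a : ℕ) := hasProd_one_sub_pow hq (show 10 ≠ 0 by norm_num) a
  have hne {a : ℕ} (ha : a ≠ 0) : qPochInf (q ^ 10) (q ^ a) ≠ 0 :=
    qPochInf_ne_zero_of_norm_lt_one (norm_pow_lt_one hq (by norm_num)) (norm_pow_lt_one hq ha)
  have quotient := (((factor 1).mul (factor 2)).mul (factor 8)).mul (factor 9) |>.div₀
    ((((factor 3).mul (factor 4)).mul (factor 6)).mul (factor 7)) (by simp [hne])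
  have theta {a : ℕ} (ha : a ≤ 10) := qTheta_pow_eq_mul hq0 ha
  have theta_one := theta (a := 1) (by norm_num)
  rw [pow_one] at theta_one
  rw [ramK, quotient.tprod_eq, levelTenK, theta_one, theta (by norm_num), theta (by norm_num),
    theta (by norm_num), pow_one]
  ring

end RealTransfer

theorem stmt_14_general {q : ℝ} (hq0 : q ≠ 0) (hq : |q| < 1) :
    HasDerivAt (fun x : ℝ => -((1 + ramK x ^ 2) / ramK x))
      (eulerE (q ^ 2) ^ 3 * eulerE (q ^ 5) ^ 8 / (q ^ 2 * eulerE (q ^ 10) ^ 7)) q := by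
  have hqc : ‖(q : ℂ)‖ < 1 := by rwa [Complex.norm_real]
  have real_deriv := (hasDerivAt_neg_one_add_levelTenK_sq_div
    (Complex.ofReal_ne_zero.2 hq0) hqc).real_of_complex
  have euler {n : ℕ} (hn : n ≠ 0) : eulerFn ((q : ℂ) ^ n) = (eulerE (q ^ n) : ℂ) := by
    rw [ofReal_eulerE (norm_pow_lt_one hq hn), Complex.ofReal_pow]
  have quotient_re : (fun x : ℝ => -((1 + ramK x ^ 2) / ramK x)) =ᶠ[𝓝 q]
      fun x : ℝ => (-((1 + levelTenK (x : ℂ) ^ 2) / levelTenK (x : ℂ))).re := by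
    filter_upwards [eventually_ne_nhds hq0, continuous_abs.continuousAt.eventually_lt_const hq]
      with x hx0 hx
    rw [ramK_eq_levelTenK hx0 hx, ← ofReal_levelTenK hx]
    norm_cast
  refine (real_deriv.congr_of_eventuallyEq quotient_re).congr_deriv ?_
  rw [euler two_ne_zero, euler (by norm_num), euler (by norm_num)]
  norm_cast

theorem stmt_14 (q : ℝ) (hq0 : 0 < q) (hq1 : q < 1) :
    HasDerivAt (fun x : ℝ => -((1 + ramK x ^ 2) / ramK x))
      (eulerE (q ^ 2) ^ 3 * eulerE (q ^ 5) ^ 8 / (q ^ 2 * eulerE (q ^ 10) ^ 7)) q :=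
  stmt_14_general hq0.ne' (by rwa [abs_of_pos hq0])
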